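/- arXiv:1503.03822 — 7 statements merged into one kernel-verified Lean document; each statement's English description precedes it below -/
import Mathlib

section
/- The right wedge is causally complete: for d ≥ 2, the double causal complement of W_R equals W_R, i.e. (W_R′)′ = W_R. -/
/-- The Minkowski inner product on `ℝ^(d+2)`:
`⟨x,y⟩ = x₀y₀ - x₁y₁ - ⋯ = 2 x₀ y₀ - ∑ᵢ xᵢ yᵢ`. -/
noncomputable def mink {d : ℕ} (x y : Fin (d + 2) → ℝ) : ℝ :=
  2 * x 0 * y 0 - ∑ i, x i * y i

/-- The right wedge `W_R = {x : x₁ > |x₀|}`. -/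
def WR {d : ℕ} : Set (Fin (d + 2) → ℝ) := {x | |x 0| < x 1}

/-- The causal complement of a set: all points spacelike separated from every point of the set. -/
noncomputable def ccomp {d : ℕ} (O : Set (Fin (d + 2) → ℝ)) : Set (Fin (d + 2) → ℝ) :=
  {y | ∀ x ∈ O, mink (y - x) (y - x) < 0}

/-!
The causal complement of `W_R` is the closed left wedge, and the causal complement of the closed
left wedge is `W_R`. Points `x` of `W_R` and `y` of the closed left wedge are spacelike separated
by the triangle inequality `|y₀ - x₀| ≤ |y₀| + |x₀| < x₁ - y₁`. Conversely, the two light rays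
through `z` parallel to the `x₀x₁`-plane meet the hyperplane `x₀ = 0` at `x₁ = z₁ ± |z₀|`. If `z`
is in the causal complement of `W_R`, the `+` point lies outside `W_R`, so `z₁ + |z₀| ≤ 0`; if `z`
is in the causal complement of the closed left wedge, the `-` point lies outside that wedge, so
`z₁ - |z₀| > 0`.
-/

/-- The closed left wedge `{y : y₁ ≤ -|y₀|}`, the closure of the reflection of `W_R` in the
hyperplane `y₁ = 0`; it serves as the explicit form of `W_R′`. -/
def closedLeftWedge {d : ℕ} : Set (Fin (d + 2) → ℝ) := {y | y 1 ≤ -|y 0|}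

section

variable {d : ℕ}

theorem mink_neg_neg (x y : Fin (d + 2) → ℝ) : mink (-x) (-y) = mink x y := by
  simp [mink]

theorem mink_sub_self_comm (x y : Fin (d + 2) → ℝ) :
    mink (x - y) (x - y) = mink (y - x) (y - x) := by
  rw [← mink_neg_neg, neg_sub]

theorem mink_self_eq (x : Fin (d + 2) → ℝ) :
    mink x x = x 0 ^ 2 - x 1 ^ 2 - ∑ i : Fin d, x i.succ.succ ^ 2 := by
  simp only [mink, Fin.sum_univ_succ, Fin.succ_zero_eq_one, ← sq]
  ring

theorem mink_self_neg_of_abs_lt {x : Fin (d + 2) → ℝ} (h : |x 0| < |x 1|) : mink x x < 0 := by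
  have transverse_nonneg : 0 ≤ ∑ i : Fin d, x i.succ.succ ^ 2 :=
    Finset.sum_nonneg fun i _ => sq_nonneg _
  have time_lt_space : x 0 ^ 2 < x 1 ^ 2 := sq_lt_sq.mpr h
  rw [mink_self_eq]
  linarith

theorem mink_sub_self_neg_of_mem_WR_of_mem_closedLeftWedge
    {x y : Fin (d + 2) → ℝ} (hx : x ∈ WR) (hy : y ∈ closedLeftWedge) :
    mink (y - x) (y - x) < 0 := by
  have hx : |x 0| < x 1 := hx
  have hy : y 1 ≤ -|y 0| := hy
  apply mink_self_neg_of_abs_lt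
  calc |y 0 - x 0| ≤ |y 0| + |x 0| := abs_sub _ _
    _ < -(y 1 - x 1) := by linarith
    _ ≤ |y 1 - x 1| := neg_le_abs _

theorem exists_time_zero_lightlike_separated (z : Fin (d + 2) → ℝ) {s : ℝ} (hs : |s| = |z 0|) :
    ∃ y : Fin (d + 2) → ℝ, y 0 = 0 ∧ y 1 = z 1 + s ∧ mink (z - y) (z - y) = 0 := by
  refine ⟨Fin.cons 0 (Fin.cons (z 1 + s) fun i => z i.succ.succ), rfl, rfl, ?_⟩
  have hs : s ^ 2 = z 0 ^ 2 := sq_eq_sq_iff_abs_eq_abs _ _ |>.mpr hs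
  rw [mink_self_eq, ← Fin.succ_zero_eq_one]
  simp [hs]

theorem ccomp_WR : ccomp (WR (d := d)) = closedLeftWedge := by
  refine Set.Subset.antisymm (fun y hy => ?_)
    fun y hy x hx => mink_sub_self_neg_of_mem_WR_of_mem_closedLeftWedge hx hy
  obtain ⟨x, hx0, hx1, lightlike⟩ := exists_time_zero_lightlike_separated y (abs_abs (y 0))
  have hx : x ∉ WR := fun hx => (hy x hx).ne lightlike
  have : y 1 + |y 0| ≤ 0 := by simpa [WR, hx0, hx1] using hx
  exact le_neg_iff_add_nonpos_right.mpr this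

theorem ccomp_closedLeftWedge : ccomp (closedLeftWedge (d := d)) = WR := by
  refine Set.Subset.antisymm (fun x hx => ?_) fun x hx y hy =>
    (mink_sub_self_comm x y).trans_lt
      (mink_sub_self_neg_of_mem_WR_of_mem_closedLeftWedge hx hy)
  obtain ⟨y, hy0, hy1, lightlike⟩ :=
    exists_time_zero_lightlike_separated x (s := -|x 0|) (by simp)
  have hy : y ∉ closedLeftWedge := fun hy => (hx y hy).ne lightlike
  have : 0 < x 1 + -|x 0| := by simpa [closedLeftWedge, hy0, hy1] using hy
  exact lt_add_neg_iff_lt.mp this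

end

/-- The right wedge is causally complete: `(W_R')' = W_R`. -/
theorem right_wedge_causally_complete (d : ℕ) :
    ccomp (ccomp (WR (d := d))) = WR := by
  rw [ccomp_WR, ccomp_closedLeftWedge]
end

section
/- If Λ is a proper Lorentz transformation of ℝ^d (d ≥ 2) and a ∈ ℝ^d are such that Λ(W_R) + a ⊆ W_R, then Λ(W_R) = W_R and a lies in the closure of W_R (i.e. a₁ ≥ |a₀|). -/
/-!
Rescaling the affine inclusion `Λ W + a ⊆ W` by `t > 0` gives `Λ W + t a ⊆ W`. Letting `t → 0`
yields `Λ W ⊆ closure W`, and since `Λ` is open and the convex open set `W` is the interior of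
its closure, even `Λ W ⊆ W`. The reverse inclusion is a duality: `x` lies in `W` if and only if
it pairs negatively with every nonzero null vector of `closure W`, and `Λ` maps these null
vectors to one another while preserving the pairing.
-/

open Set Filter Topology

section AffineImageOfCone

variable {E F : Type*} [AddCommGroup E] [Module ℝ E] [AddCommGroup F] [Module ℝ F]
  [TopologicalSpace F] [ContinuousAdd F] [ContinuousSMul ℝ F]
  {L : E →ₗ[ℝ] F} {a : F} {C : ConvexCone ℝ E}

theorem mem_closure_of_mapsTo_linear_add {S : Set F} (hC : (C : Set E).Nonempty)
    (h : MapsTo (fun x ↦ L x + a) C S) : a ∈ closure S := by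
  obtain ⟨x, hx⟩ := hC
  have hlim : Tendsto (fun t : ℝ ↦ t • L x + a) (𝓝[>] 0) (𝓝 a) :=
    tendsto_nhdsWithin_of_tendsto_nhds <| Continuous.tendsto' (by fun_prop) _ _ (by simp)
  refine mem_closure_of_tendsto hlim ?_
  filter_upwards [self_mem_nhdsWithin] with t ht
  simpa using h (C.smul_mem ht hx)

theorem mapsTo_closure_of_mapsTo_linear_add {D : ConvexCone ℝ F}
    (h : MapsTo (fun x ↦ L x + a) C D) : MapsTo L C (closure D) := by
  intro x hx
  have hlim : Tendsto (fun t : ℝ ↦ L x + t • a) (𝓝[>] 0) (𝓝 (L x)) :=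
    tendsto_nhdsWithin_of_tendsto_nhds <| Continuous.tendsto' (by fun_prop) _ _ (by simp)
  refine mem_closure_of_tendsto hlim ?_
  filter_upwards [self_mem_nhdsWithin] with t ht
  have hmem : t • (L (t⁻¹ • x) + a) ∈ D := D.smul_mem ht (h (C.smul_mem (inv_pos.2 ht) hx))
  simpa [smul_smul, (mem_Ioi.1 ht).ne'] using hmem

end AffineImageOfCone

theorem mapsTo_of_mapsTo_linear_add_of_isOpen {E F : Type*}
    [AddCommGroup E] [Module ℝ E] [TopologicalSpace E]
    [AddCommGroup F] [Module ℝ F] [TopologicalSpace F] [IsTopologicalAddGroup F]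
    [ContinuousSMul ℝ F] {L : E →ₗ[ℝ] F} {a : F} {C : ConvexCone ℝ E} {D : ConvexCone ℝ F}
    (hL : IsOpenMap L) (hC : IsOpen (C : Set E)) (hD : IsOpen (D : Set F))
    (h : MapsTo (fun x ↦ L x + a) C D) : MapsTo L C D := by
  intro x hx
  have hint : interior (closure (D : Set F)) = D := by
    rw [D.convex.interior_closure_eq_interior_of_nonempty_interior, hD.interior_eq]
    exact hD.interior_eq.symm ▸ ⟨L x + a, h hx⟩
  have himage : L '' C ⊆ interior (closure D) :=
    interior_maximal (mapsTo_closure_of_mapsTo_linear_add h).image_subset (hL _ hC)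
  exact (hint ▸ himage) (mem_image_of_mem L hx)

section Minkowski

variable {d : ℕ} {x y : Fin (d + 2) → ℝ} {Λ : (Fin (d + 2) → ℝ) →ₗ[ℝ] (Fin (d + 2) → ℝ)}

theorem mink_eq_sub_sub_sum (x y : Fin (d + 2) → ℝ) :
    mink x y = x 0 * y 0 - x 1 * y 1 - ∑ i : Fin d, x i.succ.succ * y i.succ.succ := by
  simp only [mink, Fin.sum_univ_succ, Fin.succ_zero_eq_one]
  ring

theorem mink_nondegenerate (h : ∀ y, mink x y = 0) : x = 0 := by
  have hcoord (i) : 2 * x 0 * Pi.single (M := fun _ ↦ ℝ) i 1 0 - x i = 0 := by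
    simpa [mink, Pi.single_apply] using h (Pi.single i 1)
  have hzero : x 0 = 0 := by
    have := hcoord 0
    rw [Pi.single_eq_same] at this
    linarith
  funext i
  simpa [hzero] using hcoord i

theorem injective_of_mink_map (hΛ : ∀ x y, mink (Λ x) (Λ y) = mink x y) :
    Function.Injective Λ := by
  refine (injective_iff_map_eq_zero Λ).2 fun x hx ↦ mink_nondegenerate fun y ↦ ?_
  rw [← hΛ, hx]
  simp [mink]

theorem mem_WR : x ∈ WR ↔ |x 0| < x 1 := Iff.rfl

variable (d) in
/-- The right wedge `WR`, bundled as a convex cone. -/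
def wedgeCone : ConvexCone ℝ (Fin (d + 2) → ℝ) where
  carrier := WR
  smul_mem' c hc x hx := by
    simpa [mem_WR, abs_mul, abs_of_pos hc, hc] using hx
  add_mem' x hx y hy := mem_WR.2 <| (abs_add_le _ _).trans_lt (add_lt_add hx hy)

theorem isOpen_WR : IsOpen (WR : Set (Fin (d + 2) → ℝ)) :=
  isOpen_lt (by fun_prop) (by fun_prop)

theorem single_one_mem_WR : (Pi.single 1 1 : Fin (d + 2) → ℝ) ∈ WR := by
  simp [mem_WR]

theorem mem_closure_WR : x ∈ closure WR ↔ |x 0| ≤ x 1 := by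
  constructor
  · have hclosed : IsClosed {x : Fin (d + 2) → ℝ | |x 0| ≤ x 1} :=
      isClosed_le (by fun_prop) (by fun_prop)
    have hsub : WR ⊆ {x : Fin (d + 2) → ℝ | |x 0| ≤ x 1} := fun _ hy ↦ (mem_WR.1 hy).le
    exact fun hx ↦ closure_minimal hsub hclosed hx
  · intro hx
    have hlim : Tendsto (fun t : ℝ ↦ x + t • Pi.single 1 1) (𝓝[>] 0) (𝓝 x) :=
      tendsto_nhdsWithin_of_tendsto_nhds <| Continuous.tendsto' (by fun_prop) _ _ (by simp)
    refine mem_closure_of_tendsto hlim ?_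
    filter_upwards [self_mem_nhdsWithin] with t ht
    simpa [mem_WR] using hx.trans_lt (lt_add_of_pos_right _ ht)

theorem abs_eq_and_transverse_eq_zero_of_null (hx : x ∈ closure WR) (hnull : mink x x = 0) :
    |x 0| = x 1 ∧ ∀ i : Fin d, x i.succ.succ = 0 := by
  rw [mem_closure_WR] at hx
  rw [mink_eq_sub_sub_sum] at hnull
  have hnonneg : ∀ i ∈ (Finset.univ : Finset (Fin d)), 0 ≤ x i.succ.succ * x i.succ.succ :=
    fun i _ ↦ mul_self_nonneg _
  have hsq : x 0 ^ 2 ≤ x 1 ^ 2 := sq_le_sq.2 (hx.trans (le_abs_self _))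
  have hsum : ∑ i : Fin d, x i.succ.succ * x i.succ.succ = 0 := by
    linarith [Finset.sum_nonneg hnonneg]
  refine ⟨?_, fun i ↦ mul_self_eq_zero.1 <|
    (Finset.sum_eq_zero_iff_of_nonneg hnonneg).1 hsum i (Finset.mem_univ i)⟩
  rw [← abs_of_nonneg ((abs_nonneg _).trans hx), ← sq_eq_sq_iff_abs_eq_abs]
  linarith

theorem mink_neg_of_null (hx : x ∈ closure WR) (hne : x ≠ 0) (hnull : mink x x = 0)
    (hy : y ∈ WR) : mink x y < 0 := by
  obtain ⟨habs, htrans⟩ := abs_eq_and_transverse_eq_zero_of_null hx hnull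
  have hpos : 0 < x 1 := by
    refine (habs ▸ abs_nonneg (x 0)).lt_of_ne' fun hone ↦ hne ?_
    rw [hone, abs_eq_zero] at habs
    exact funext <| Fin.cases habs <| Fin.cases hone htrans
  calc mink x y = x 0 * y 0 - x 1 * y 1 := by simp [mink_eq_sub_sub_sum, htrans]
    _ ≤ |x 0 * y 0| - x 1 * y 1 := sub_le_sub_right (le_abs_self _) _
    _ = x 1 * |y 0| - x 1 * y 1 := by rw [abs_mul, habs]
    _ < 0 := sub_neg.2 (mul_lt_mul_of_pos_left hy hpos)

theorem mem_WR_iff_forall_null_mink_neg :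
    y ∈ WR ↔ ∀ x ∈ closure WR, x ≠ 0 → mink x x = 0 → mink x y < 0 := by
  refine ⟨fun hy x hx hne hnull ↦ mink_neg_of_null hx hne hnull hy, fun h ↦ ?_⟩
  have hray (s : ℝ) (hs : |s| = 1) : s * y 0 < y 1 := by
    let n : Fin (d + 2) → ℝ := Pi.single 1 1 + Pi.single 0 s
    have hmink (z) : mink n z = s * z 0 - z 1 := by
      simp [n, mink_eq_sub_sub_sum, Fin.ext_iff]
    have hneg := h n (mem_closure_WR.2 (by simp [n, hs]))
      (fun hn ↦ by simpa [n] using congrFun hn 1)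
      (by simp [hmink, n, ← abs_mul_abs_self s, hs])
    rw [hmink] at hneg
    linarith
  have hplus : 1 * y 0 < y 1 := hray 1 (by simp)
  have hminus : -1 * y 0 < y 1 := hray (-1) (by simp)
  exact mem_WR.2 <| abs_lt.2 ⟨by linarith, by linarith⟩

theorem mem_WR_of_map_mem_WR (hΛ : ∀ x y, mink (Λ x) (Λ y) = mink x y)
    (hWR : MapsTo Λ WR WR) (hy : Λ y ∈ WR) : y ∈ WR := by
  refine mem_WR_iff_forall_null_mink_neg.2 fun x hx hne hnull ↦ ?_
  rw [← hΛ] at hnull ⊢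
  exact mem_WR_iff_forall_null_mink_neg.1 hy (Λ x)
    (hWR.closure Λ.continuous_of_finiteDimensional hx)
    ((map_ne_zero_iff Λ (injective_of_mink_map hΛ)).2 hne) hnull

end Minkowski

theorem wedge_inclusion_rigidity_general {d : ℕ}
    (Λ : (Fin (d + 2) → ℝ) →ₗ[ℝ] (Fin (d + 2) → ℝ))
    (hmink : ∀ x y, mink (Λ x) (Λ y) = mink x y)
    (a : Fin (d + 2) → ℝ)
    (hsub : (fun w => Λ w + a) '' WR ⊆ WR) :
    (⇑Λ) '' WR = WR ∧ |a 0| ≤ a 1 := by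
  have hsurj : Function.Surjective Λ :=
    LinearMap.injective_iff_surjective.1 (injective_of_mink_map hmink)
  have haffine : MapsTo (fun w ↦ Λ w + a) (wedgeCone d) (wedgeCone d) :=
    mapsTo_iff_image_subset.2 hsub
  have hWR : MapsTo Λ WR WR :=
    mapsTo_of_mapsTo_linear_add_of_isOpen (Λ.isOpenMap_of_finiteDimensional hsurj)
      isOpen_WR isOpen_WR haffine
  refine ⟨hWR.image_subset.antisymm fun y hy ↦ ?_, mem_closure_WR.1 <|
    mem_closure_of_mapsTo_linear_add ⟨_, single_one_mem_WR⟩ haffine⟩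
  obtain ⟨x, rfl⟩ := hsurj y
  exact mem_image_of_mem Λ (mem_WR_of_map_mem_WR hmink hWR hy)

/-- if `Λ` is a proper Lorentz transformation and `a ∈ ℝ^d` are such that
`Λ(W_R) + a ⊆ W_R`, then `Λ(W_R) = W_R` and `a` lies in the closure of `W_R`
(i.e. `a₁ ≥ |a₀|`). -/
theorem wedge_inclusion_rigidity (d : ℕ)
    (Λ : (Fin (d + 2) → ℝ) →ₗ[ℝ] (Fin (d + 2) → ℝ))
    (hbij : Function.Bijective Λ)
    (hmink : ∀ x y, mink (Λ x) (Λ y) = mink x y)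
    (hdet : LinearMap.det Λ = 1)
    (a : Fin (d + 2) → ℝ)
    (hsub : (fun w => Λ w + a) '' WR ⊆ WR) :
    (⇑Λ) '' WR = WR ∧ |a 0| ≤ a 1 :=
  wedge_inclusion_rigidity_general Λ hmink a hsub
end

section
/- Any inclusion of wedges is given by a translation: if W₁ = Λ₁(W_R) + a₁ and W₂ = Λ₂(W_R) + a₂ are wedges in ℝ^d (d ≥ 2, Λ₁, Λ₂ proper Lorentz transformations, a₁, a₂ ∈ ℝ^d) with W₁ ⊆ W₂, then there exists x ∈ closure(Λ₂(W_R)) such that W₁ = W₂ + x. -/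
/-!
Up to translation, a wedge is the open quadrant on which two functionals `⟨k, ·⟩` and `⟨l, ·⟩` are
positive, for null vectors `k`, `l` that are not orthogonal. If a translate of the quadrant of
`(k, l)` lies in that of `(k', l')`, scaling shows that `⟨k', ·⟩` is nonnegative on the former,
hence `⟨k', ·⟩ = α ⟨k, ·⟩ + β ⟨l, ·⟩` with `α, β ≥ 0`. As `k'` is null,
`0 = ⟨k', k'⟩ = 2 α β ⟨k, l⟩`, so `⟨k', ·⟩` is a multiple of `⟨k, ·⟩` or of `⟨l, ·⟩`, and the same
holds for `⟨l', ·⟩`. They cannot both be multiples of the same one because `⟨k', l'⟩ ≠ 0`, so the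
two quadrants agree.
-/

section BilinForm

variable {R E : Type*} [CommSemiring R] [AddCommMonoid E] [Module R E]

/-- A pair of null vectors of a bilinear form that are not orthogonal to each other: a hyperbolic
pair, except that the value `B k l` is not normalized. -/
structure IsNullPair (B : LinearMap.BilinForm R E) (k l : E) : Prop where
  left_null : B k k = 0
  right_null : B l l = 0
  apply_ne_zero : B k l ≠ 0

/-- The wedge bounded by the hyperplanes orthogonal to `k` and `l`. For the Minkowski
form `B` and null vectors with `B k l < 0` its translates are the wedges of Minkowski space. -/
def nullWedge [Preorder R] (B : LinearMap.BilinForm R E) (k l : E) : Set E :=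
  {x | 0 < B k x ∧ 0 < B l x}

variable {B : LinearMap.BilinForm R E} {k l : E}

theorem apply_eq_mul_of_eq_smul (hB : B.IsSymm) {α β : R} {m n : E}
    (hk : B k = α • B m) (hl : B l = β • B n) : B k l = α * β * B m n := by
  calc B k l = α * B l m := by simp [hk, hB.eq l m]
    _ = α * β * B m n := by simp [hl, hB.eq n m, mul_assoc]

theorem IsNullPair.map (h : IsNullPair B k l) {Λ : E →ₗ[R] E}
    (hΛ : ∀ x y, B (Λ x) (Λ y) = B x y) : IsNullPair B (Λ k) (Λ l) :=
  ⟨(hΛ k k).trans h.left_null, (hΛ l l).trans h.right_null, (hΛ k l).trans_ne h.apply_ne_zero⟩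

theorem nullWedge_comm [Preorder R] (B : LinearMap.BilinForm R E) (k l : E) :
    nullWedge B k l = nullWedge B l k :=
  Set.ext fun _ ↦ and_comm

theorem image_nullWedge [Preorder R] {Λ : E →ₗ[R] E} (hsurj : Function.Surjective Λ)
    (hΛ : ∀ x y, B (Λ x) (Λ y) = B x y) (k l : E) :
    Λ '' nullWedge B k l = nullWedge B (Λ k) (Λ l) := by
  have hpre : Λ ⁻¹' nullWedge B (Λ k) (Λ l) = nullWedge B k l := by
    simp [nullWedge, hΛ]
  rw [← hpre, Set.image_preimage_eq _ hsurj]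

end BilinForm

section OrderedField

variable {𝕜 E : Type*} [Field 𝕜] [LinearOrder 𝕜] [IsStrictOrderedRing 𝕜]
  [AddCommGroup E] [Module 𝕜 E]

theorem nonneg_of_forall_pos_mul_add_nonneg {a c : 𝕜} (h : ∀ t, 0 < t → 0 ≤ t * a + c) :
    0 ≤ a := by
  by_contra! ha
  have ht : 0 < (|c| + 1) / -a := div_pos (by positivity) (neg_pos.2 ha)
  have hcancel : (|c| + 1) / -a * a = -(|c| + 1) := by
    rw [div_neg, neg_mul, div_mul_cancel₀ _ ha.ne]
  linarith [h _ ht, le_abs_self c]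

theorem eq_nonneg_combination_of_nonneg_on_quadrant {f g h : Module.Dual 𝕜 E} {u v : E}
    (hgu : g u = 1) (hgv : g v = 0) (hhu : h u = 0) (hhv : h v = 1)
    (hf : ∀ x, 0 < g x → 0 < h x → 0 ≤ f x) :
    0 ≤ f u ∧ 0 ≤ f v ∧ f = f u • g + f v • h := by
  have hu : 0 ≤ f u := nonneg_of_forall_pos_mul_add_nonneg (c := f v) fun t ht ↦ by
    simpa using hf (t • u + v) (by simpa [hgu, hgv]) (by simp [hhu, hhv])
  have hv : 0 ≤ f v := nonneg_of_forall_pos_mul_add_nonneg (c := f u) fun t ht ↦ by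
    simpa using hf (t • v + u) (by simp [hgu, hgv]) (by simpa [hhu, hhv])
  have nonneg_of_ker (y : E) (hgy : g y = 0) (hhy : h y = 0) : 0 ≤ f y :=
    nonneg_of_forall_pos_mul_add_nonneg (c := f (u + v)) fun t _ ↦ by
      simpa using hf (t • y + (u + v)) (by simp [hgu, hgv, hgy]) (by simp [hhu, hhv, hhy])
  have eq_zero_of_ker (y : E) (hgy : g y = 0) (hhy : h y = 0) : f y = 0 :=
    le_antisymm (by simpa using nonneg_of_ker (-y) (by simp [hgy]) (by simp [hhy]))
      (nonneg_of_ker y hgy hhy)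
  refine ⟨hu, hv, LinearMap.ext fun x ↦ ?_⟩
  have hx := eq_zero_of_ker (x - (g x • u + h x • v)) (by simp [hgu, hgv]) (by simp [hhu, hhv])
  simp only [map_sub, map_add, map_smul, smul_eq_mul] at hx
  simp only [LinearMap.add_apply, LinearMap.smul_apply, smul_eq_mul]
  linear_combination hx

theorem mem_closure_of_forall_pos_smul_add_mem [TopologicalSpace 𝕜] [OrderTopology 𝕜]
    [TopologicalSpace E] [ContinuousAdd E] [ContinuousSMul 𝕜 E] {s : Set E} {w b : E}
    (h : ∀ t : 𝕜, 0 < t → t • w + b ∈ s) : b ∈ closure s := by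
  have hcont : Continuous fun t : 𝕜 ↦ t • w + b := by fun_prop
  have hlim : Filter.Tendsto (fun t : 𝕜 ↦ t • w + b) (nhdsWithin 0 (Set.Ioi 0)) (nhds b) := by
    simpa using (hcont.tendsto 0).mono_left nhdsWithin_le_nhds
  exact mem_closure_of_tendsto hlim (eventually_mem_nhdsWithin.mono h)

variable {B : LinearMap.BilinForm 𝕜 E} {k l k' l' : E}

theorem smul_mem_nullWedge {t : 𝕜} (ht : 0 < t) {x : E} (hx : x ∈ nullWedge B k l) :
    t • x ∈ nullWedge B k l := by
  simpa [nullWedge, ht] using hx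

theorem nullWedge_eq_of_eq_pos_smul {α β : 𝕜} (hα : 0 < α) (hβ : 0 < β)
    (hk : B k' = α • B k) (hl : B l' = β • B l) : nullWedge B k l = nullWedge B k' l' := by
  simp [nullWedge, hk, hl, hα, hβ]

namespace IsNullPair

theorem nullWedge_nonempty (h : IsNullPair B k l) (hB : B.IsSymm) :
    (nullWedge B k l).Nonempty := by
  refine ⟨(B k l)⁻¹ • (k + l), ?_⟩
  simp [nullWedge, h.left_null, h.right_null, h.apply_ne_zero, hB.eq l k]

theorem eq_smul_or_eq_smul_of_nonneg (h : IsNullPair B k l) (hB : B.IsSymm) {n : E}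
    (hn : B n n = 0) (hnonneg : ∀ x ∈ nullWedge B k l, 0 ≤ B n x) :
    (∃ α : 𝕜, 0 ≤ α ∧ B n = α • B k) ∨ ∃ β : 𝕜, 0 ≤ β ∧ B n = β • B l := by
  have hlk : B l k = B k l := hB.eq l k
  obtain ⟨hα, hβ, hcomb⟩ := eq_nonneg_combination_of_nonneg_on_quadrant
    (f := B n) (g := B k) (h := B l) (u := (B k l)⁻¹ • l) (v := (B k l)⁻¹ • k)
    (by simp [h.apply_ne_zero]) (by simp [h.left_null]) (by simp [h.right_null])
    (by simp [hlk, h.apply_ne_zero]) fun x hkx hlx ↦ hnonneg x ⟨hkx, hlx⟩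
  generalize B n ((B k l)⁻¹ • l) = α at hα hcomb
  generalize B n ((B k l)⁻¹ • k) = β at hβ hcomb
  have hnk : B k n = β * B k l := by simp [hB.eq k n, hcomb, h.left_null, hlk]
  have hnl : B l n = α * B k l := by simp [hB.eq l n, hcomb, h.right_null]
  have hnn : 2 * (α * β) * B k l = 0 := by
    rw [hcomb] at hn
    simp only [LinearMap.add_apply, LinearMap.smul_apply, smul_eq_mul, hnk, hnl] at hn
    linear_combination hn
  have hαβ : α = 0 ∨ β = 0 := by simpa [h.apply_ne_zero] using hnn
  rcases hαβ with rfl | rfl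
  · exact Or.inr ⟨β, hβ, by simpa using hcomb⟩
  · exact Or.inl ⟨α, hα, by simpa using hcomb⟩

theorem nullWedge_eq_of_nonneg (h : IsNullPair B k l) (h' : IsNullPair B k' l') (hB : B.IsSymm)
    (hk' : ∀ x ∈ nullWedge B k l, 0 ≤ B k' x) (hl' : ∀ x ∈ nullWedge B k l, 0 ≤ B l' x) :
    nullWedge B k l = nullWedge B k' l' := by
  have pos_of_eq_smul {α β : 𝕜} {m n : E} (hα : 0 ≤ α) (hβ : 0 ≤ β) (hm : B k' = α • B m)
      (hn : B l' = β • B n) : 0 < α ∧ 0 < β ∧ B m n ≠ 0 := by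
    have hne := h'.apply_ne_zero
    rw [apply_eq_mul_of_eq_smul hB hm hn, mul_ne_zero_iff, mul_ne_zero_iff] at hne
    exact ⟨hα.lt_of_ne' hne.1.1, hβ.lt_of_ne' hne.1.2, hne.2⟩
  rcases h.eq_smul_or_eq_smul_of_nonneg hB h'.left_null hk' with ⟨α, hα, hαk⟩ | ⟨α, hα, hαl⟩ <;>
  rcases h.eq_smul_or_eq_smul_of_nonneg hB h'.right_null hl' with ⟨β, hβ, hβk⟩ | ⟨β, hβ, hβl⟩
  · exact absurd h.left_null (pos_of_eq_smul hα hβ hαk hβk).2.2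
  · obtain ⟨hα, hβ, -⟩ := pos_of_eq_smul hα hβ hαk hβl
    exact nullWedge_eq_of_eq_pos_smul hα hβ hαk hβl
  · obtain ⟨hα, hβ, -⟩ := pos_of_eq_smul hα hβ hαl hβk
    rw [nullWedge_comm B k l]
    exact nullWedge_eq_of_eq_pos_smul hα hβ hαl hβk
  · exact absurd h.right_null (pos_of_eq_smul hα hβ hαl hβl).2.2

theorem nullWedge_eq_of_add_mem (h : IsNullPair B k l) (h' : IsNullPair B k' l') (hB : B.IsSymm)
    {b : E} (hadd : ∀ x ∈ nullWedge B k l, x + b ∈ nullWedge B k' l') :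
    nullWedge B k l = nullWedge B k' l' := by
  refine h.nullWedge_eq_of_nonneg h' hB (fun x hx ↦ ?_) fun x hx ↦ ?_
  · exact nonneg_of_forall_pos_mul_add_nonneg (c := B k' b) fun t ht ↦ by
      simpa using (hadd _ (smul_mem_nullWedge ht hx)).1.le
  · exact nonneg_of_forall_pos_mul_add_nonneg (c := B l' b) fun t ht ↦ by
      simpa using (hadd _ (smul_mem_nullWedge ht hx)).2.le

end IsNullPair

theorem wedge_inclusion_is_translation_general [TopologicalSpace 𝕜] [OrderTopology 𝕜]
    [TopologicalSpace E] [ContinuousAdd E] [ContinuousSMul 𝕜 E] (hB : B.IsSymm)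
    (h : IsNullPair B k l) (h' : IsNullPair B k' l') {a a' : E}
    (hsub : (· + a) '' nullWedge B k l ⊆ (· + a') '' nullWedge B k' l') :
    ∃ x ∈ closure (nullWedge B k' l'),
      (· + a) '' nullWedge B k l = (· + x) '' ((· + a') '' nullWedge B k' l') := by
  have hadd : ∀ w ∈ nullWedge B k l, w + (a - a') ∈ nullWedge B k' l' := by
    intro w hw
    obtain ⟨v, hv, hvw⟩ := hsub ⟨w, hw, rfl⟩
    rwa [← add_sub_assoc, ← eq_sub_of_add_eq hvw]
  obtain ⟨w, hw⟩ := h.nullWedge_nonempty hB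
  refine ⟨a - a', mem_closure_of_forall_pos_smul_add_mem (𝕜 := 𝕜) fun t ht ↦
    hadd _ (smul_mem_nullWedge ht hw), ?_⟩
  simp only [h.nullWedge_eq_of_add_mem h' hB hadd, Set.image_image, add_assoc, add_sub_cancel]

end OrderedField

section Minkowski

variable {d : ℕ}

/-- The Minkowski inner product `mink` as a bilinear form. -/
noncomputable def minkForm (d : ℕ) : LinearMap.BilinForm ℝ (Fin (d + 2) → ℝ) :=
  LinearMap.mk₂ ℝ mink
    (fun x x' y ↦ by simp only [mink, Pi.add_apply, add_mul, Finset.sum_add_distrib]; ring)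
    (fun c x y ↦ by
      simp only [mink, Pi.smul_apply, smul_eq_mul, mul_assoc, ← Finset.mul_sum]; ring)
    (fun x y y' ↦ by simp only [mink, Pi.add_apply, mul_add, Finset.sum_add_distrib]; ring)
    (fun c x y ↦ by
      simp only [mink, Pi.smul_apply, smul_eq_mul, mul_left_comm _ c, ← Finset.mul_sum]; ring)

theorem minkForm_isSymm (d : ℕ) : (minkForm d).IsSymm :=
  ⟨fun x y ↦ by simp [minkForm, mink, mul_comm, mul_left_comm]⟩

/-- The vector `(s, -1, 0, …, 0)`, null for `s = ±1`; the sign of the second entry makes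
`mink (wedgeNormal s) x = s * x 0 + x 1`. -/
def wedgeNormal (s : ℝ) : Fin (d + 2) → ℝ := Pi.single 0 s - Pi.single 1 1

theorem minkForm_wedgeNormal (s : ℝ) (x : Fin (d + 2) → ℝ) :
    minkForm d (wedgeNormal s) x = s * x 0 + x 1 := by
  have hzero : wedgeNormal (d := d) s 0 = s := by simp [wedgeNormal]
  have hsum : ∑ i, wedgeNormal s i * x i = s * x 0 - x 1 := by
    simp [wedgeNormal, sub_mul, Finset.sum_sub_distrib, Pi.single_apply]
  calc minkForm d (wedgeNormal s) x
      = 2 * wedgeNormal (d := d) s 0 * x 0 - ∑ i, wedgeNormal s i * x i := rfl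
    _ = s * x 0 + x 1 := by rw [hzero, hsum]; ring

theorem isNullPair_wedgeNormal (d : ℕ) :
    IsNullPair (minkForm d) (wedgeNormal 1) (wedgeNormal (-1)) := by
  constructor <;> rw [minkForm_wedgeNormal] <;> norm_num [wedgeNormal]

theorem WR_eq_nullWedge (d : ℕ) :
    WR = nullWedge (minkForm d) (wedgeNormal 1) (wedgeNormal (-1)) := by
  ext x
  simp only [WR, nullWedge, Set.mem_ofPred_eq, minkForm_wedgeNormal, abs_lt]
  constructor <;> rintro ⟨hneg, hpos⟩ <;> constructor <;> linarith

theorem image_WR {Λ : (Fin (d + 2) → ℝ) →ₗ[ℝ] (Fin (d + 2) → ℝ)}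
    (hsurj : Function.Surjective Λ) (hΛ : ∀ x y, mink (Λ x) (Λ y) = mink x y) :
    Λ '' WR = nullWedge (minkForm d) (Λ (wedgeNormal 1)) (Λ (wedgeNormal (-1))) := by
  rw [WR_eq_nullWedge]
  exact image_nullWedge hsurj hΛ _ _

end Minkowski

/-- any inclusion of wedges `W₁ = Λ₁(W_R) + a₁ ⊆ W₂ = Λ₂(W_R) + a₂` is given by a
translation: there is `x ∈ closure (Λ₂(W_R))` with `W₁ = W₂ + x`. -/
theorem wedge_inclusion_is_translation (d : ℕ)
    (Λ₁ Λ₂ : (Fin (d + 2) → ℝ) →ₗ[ℝ] (Fin (d + 2) → ℝ))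
    (h₁bij : Function.Bijective Λ₁)
    (h₁mink : ∀ x y, mink (Λ₁ x) (Λ₁ y) = mink x y)
    (h₁det : LinearMap.det Λ₁ = 1)
    (h₂bij : Function.Bijective Λ₂)
    (h₂mink : ∀ x y, mink (Λ₂ x) (Λ₂ y) = mink x y)
    (h₂det : LinearMap.det Λ₂ = 1)
    (a₁ a₂ : Fin (d + 2) → ℝ)
    (hsub : (fun w => Λ₁ w + a₁) '' WR ⊆ (fun w => Λ₂ w + a₂) '' WR) :
    ∃ x ∈ closure ((⇑Λ₂) '' WR),
      (fun w => Λ₁ w + a₁) '' WR = (fun w => w + x) '' ((fun w => Λ₂ w + a₂) '' WR) := by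
  simp only [← Set.image_image (· + a₁) Λ₁, ← Set.image_image (· + a₂) Λ₂,
    image_WR h₁bij.surjective h₁mink, image_WR h₂bij.surjective h₂mink] at hsub ⊢
  exact wedge_inclusion_is_translation_general (minkForm_isSymm d)
    ((isNullPair_wedgeNormal d).map h₁mink) ((isNullPair_wedgeNormal d).map h₂mink) hsub
end

section
/- Wedges causally separate double cones in two dimensions: let O₁ = (W_R + x) ∩ (W_L + y) and O₂ = (W_R + x′) ∩ (W_L + y′) be nonempty double cones in ℝ² (so y − x ∈ W_R and y′ − x′ ∈ W_R) such that every point of O₁ is spacelike separated from every point of O₂. Then there exists a ∈ ℝ² such that either O₁ ⊆ W_R + a and O₂ ⊆ W_L + a, or O₁ ⊆ W_L + a and O₂ ⊆ W_R + a. -/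
/-- The Minkowski inner product on two-dimensional Minkowski space. -/
noncomputable def mink2 (x y : Fin 2 → ℝ) : ℝ := x 0 * y 0 - x 1 * y 1

/-- The right wedge `W_R = {x : x₁ > |x₀|}` in `ℝ²`. -/
def WR2 : Set (Fin 2 → ℝ) := {x | |x 0| < x 1}

/-- The left wedge `W_L = -W_R` in `ℝ²`. -/
def WL2 : Set (Fin 2 → ℝ) := {x | -x ∈ WR2}

/-- The double cone `O_{x,y} = (W_R + x) ∩ (W_L + y)` in `ℝ²`. -/
def doubleCone (x y : Fin 2 → ℝ) : Set (Fin 2 → ℝ) :=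
  ((fun w => w + x) '' WR2) ∩ ((fun w => w + y) '' WL2)

/-!
Two connected sets that are spacelike separated have a connected set of differences, which
therefore lies in one of the two wedges making up the spacelike cone. In the light-cone coordinates
`p 1 - p 0` and `p 1 + p 0` this says that one set precedes the other in both coordinates, so a
number can be inserted between their projections to either axis. These two numbers are the
coordinates of `a`; openness of the sets makes the inequalities strict.
-/

open Set

/-- The light-cone coordinate `p ↦ p 1 - p 0`, which is constant on one family of light rays. Its
positivity is one of the two conditions defining the right wedge. -/
def lightConeU : (Fin 2 → ℝ) →L[ℝ] ℝ :=
  .proj (1 : Fin 2) - .proj (0 : Fin 2)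

/-- The light-cone coordinate `p ↦ p 1 + p 0`, which is constant on the other family of light rays.
Its positivity is the other condition defining the right wedge. -/
def lightConeV : (Fin 2 → ℝ) →L[ℝ] ℝ :=
  .proj (1 : Fin 2) + .proj (0 : Fin 2)

theorem exists_lightConeU_eq_and_lightConeV_eq (u v : ℝ) :
    ∃ p, lightConeU p = u ∧ lightConeV p = v := by
  refine ⟨![(v - u) / 2, (v + u) / 2], ?_, ?_⟩ <;> simp [lightConeU, lightConeV] <;> ring

theorem isOpenMap_lightConeU : IsOpenMap lightConeU :=
  lightConeU.isOpenMap fun u => (exists_lightConeU_eq_and_lightConeV_eq u 0).imp fun _ => And.left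

theorem isOpenMap_lightConeV : IsOpenMap lightConeV :=
  lightConeV.isOpenMap fun v => (exists_lightConeU_eq_and_lightConeV_eq 0 v).imp fun _ => And.right

theorem WR2_eq_inter : WR2 = {w | 0 < lightConeU w} ∩ {w | 0 < lightConeV w} := by
  ext w
  change |w 0| < w 1 ↔ 0 < w 1 - w 0 ∧ 0 < w 1 + w 0
  rw [abs_lt, and_comm, sub_pos, neg_lt_iff_pos_add']

theorem WL2_eq_neg : WL2 = -WR2 := rfl

theorem convex_WR2 : Convex ℝ WR2 := by
  rw [WR2_eq_inter]
  exact (convex_halfSpace_gt lightConeU.isLinear 0).inter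
    (convex_halfSpace_gt lightConeV.isLinear 0)

theorem isOpen_WR2 : IsOpen WR2 := by
  rw [WR2_eq_inter]
  exact (isOpen_lt continuous_const lightConeU.continuous).inter
    (isOpen_lt continuous_const lightConeV.continuous)

theorem isOpen_WL2 : IsOpen WL2 := isOpen_WR2.neg

theorem smul_mem_WR2 {c : ℝ} (hc : 0 < c) {w : Fin 2 → ℝ} (hw : w ∈ WR2) : c • w ∈ WR2 := by
  rw [WR2_eq_inter] at hw ⊢
  simpa [hc] using hw

theorem disjoint_WR2_WL2 : Disjoint WR2 WL2 := by
  refine disjoint_left.2 fun w hR hL => ?_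
  have hpos : 0 < w 1 := (abs_nonneg _).trans_lt hR
  have hneg : 0 < -w 1 := (abs_nonneg _).trans_lt hL
  linarith

theorem mink2_self_neg_iff {w : Fin 2 → ℝ} : mink2 w w < 0 ↔ w ∈ WR2 ∪ WL2 := by
  change w 0 * w 0 - w 1 * w 1 < 0 ↔ |w 0| < w 1 ∨ |-w 0| < -w 1
  rw [sub_neg, ← abs_lt_iff_mul_self_lt, lt_abs, abs_neg]

theorem mem_image_add_WR2 {a p : Fin 2 → ℝ} : p ∈ (fun w => w + a) '' WR2 ↔ p - a ∈ WR2 := by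
  rw [image_add_right, mem_preimage, sub_eq_add_neg]

theorem mem_image_add_WL2 {a p : Fin 2 → ℝ} : p ∈ (fun w => w + a) '' WL2 ↔ a - p ∈ WR2 := by
  rw [image_add_right, mem_preimage, ← sub_eq_add_neg, WL2_eq_neg, Set.mem_neg, neg_sub]

theorem sub_mem_WR2_iff {p q : Fin 2 → ℝ} :
    p - q ∈ WR2 ↔ lightConeU q < lightConeU p ∧ lightConeV q < lightConeV p := by
  simp only [WR2_eq_inter, mem_inter_iff, mem_ofPred_eq, map_sub, sub_pos]

theorem convex_doubleCone (x y : Fin 2 → ℝ) : Convex ℝ (doubleCone x y) := by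
  rw [doubleCone, image_add_right, image_add_right]
  exact (convex_WR2.translate_preimage_left _).inter (convex_WR2.neg.translate_preimage_left _)

theorem isOpen_doubleCone (x y : Fin 2 → ℝ) : IsOpen (doubleCone x y) :=
  (isOpenMap_add_right x _ isOpen_WR2).inter (isOpenMap_add_right y _ isOpen_WL2)

theorem midpoint_mem_doubleCone {x y : Fin 2 → ℝ} (h : y - x ∈ WR2) :
    midpoint ℝ x y ∈ doubleCone x y := by
  have hhalf : (⅟2 : ℝ) • (y - x) ∈ WR2 := smul_mem_WR2 (by norm_num) h
  refine ⟨mem_image_add_WR2.2 ?_, mem_image_add_WL2.2 ?_⟩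
  · rwa [midpoint_sub_left]
  · rwa [right_sub_midpoint]

theorem isConnected_doubleCone {x y : Fin 2 → ℝ} (h : y - x ∈ WR2) :
    IsConnected (doubleCone x y) :=
  (convex_doubleCone x y).isConnected ⟨_, midpoint_mem_doubleCone h⟩

theorem exists_subset_Iio_and_subset_Ioi {α : Type*} [ConditionallyCompleteLinearOrder α]
    [TopologicalSpace α] [OrderTopology α] [DenselyOrdered α] [NoMinOrder α] [NoMaxOrder α]
    {s t : Set α} (hs : IsOpen s) (ht : IsOpen t) (hs₀ : s.Nonempty) (ht₀ : t.Nonempty)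
    (hst : ∀ x ∈ s, ∀ y ∈ t, x ≤ y) : ∃ c, s ⊆ Iio c ∧ t ⊆ Ioi c := by
  obtain ⟨c, hsc, hct⟩ := exists_between_of_forall_le hs₀ ht₀ hst
  refine ⟨c, ?_, ?_⟩
  · rw [← interior_Iic]
    exact interior_maximal hsc hs
  · rw [← interior_Ici]
    exact interior_maximal hct ht

theorem exists_subset_wedges_of_sub_mem_WR2 {S T : Set (Fin 2 → ℝ)} (hS : IsOpen S)
    (hT : IsOpen T) (hS₀ : S.Nonempty) (hT₀ : T.Nonempty)
    (hST : ∀ p ∈ S, ∀ q ∈ T, p - q ∈ WR2) :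
    ∃ a, S ⊆ (fun w => w + a) '' WR2 ∧ T ⊆ (fun w => w + a) '' WL2 := by
  have separate (f : (Fin 2 → ℝ) → ℝ) (hf : IsOpenMap f) (hlt : ∀ p ∈ S, ∀ q ∈ T, f q < f p) :
      ∃ c, T ⊆ f ⁻¹' Iio c ∧ S ⊆ f ⁻¹' Ioi c := by
    simpa only [image_subset_iff] using
      exists_subset_Iio_and_subset_Ioi (hf T hT) (hf S hS) (hT₀.image f) (hS₀.image f)
        (forall_mem_image.2 fun q hq => forall_mem_image.2 fun p hp => (hlt p hp q hq).le)
  obtain ⟨u, hTu, huS⟩ := separate lightConeU isOpenMap_lightConeU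
    fun p hp q hq => (sub_mem_WR2_iff.1 (hST p hp q hq)).1
  obtain ⟨v, hTv, hvS⟩ := separate lightConeV isOpenMap_lightConeV
    fun p hp q hq => (sub_mem_WR2_iff.1 (hST p hp q hq)).2
  obtain ⟨a, rfl, rfl⟩ := exists_lightConeU_eq_and_lightConeV_eq u v
  exact ⟨a, fun p hp => mem_image_add_WR2.2 (sub_mem_WR2_iff.2 ⟨huS hp, hvS hp⟩),
    fun q hq => mem_image_add_WL2.2 (sub_mem_WR2_iff.2 ⟨hTu hq, hTv hq⟩)⟩

theorem forall_sub_mem_WR2_or_forall_sub_mem_WR2 {S T : Set (Fin 2 → ℝ)} (hS : IsPreconnected S)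
    (hT : IsPreconnected T) (hsep : ∀ p ∈ S, ∀ q ∈ T, mink2 (p - q) (p - q) < 0) :
    (∀ p ∈ S, ∀ q ∈ T, p - q ∈ WR2) ∨ ∀ q ∈ T, ∀ p ∈ S, q - p ∈ WR2 := by
  have hdiff : IsPreconnected (image2 (· - ·) S T) := by
    rw [← image_prod]
    exact (hS.prod hT).image _ (by fun_prop)
  have hspace : image2 (· - ·) S T ⊆ WR2 ∪ WL2 :=
    image2_subset_iff.2 fun p hp q hq => mink2_self_neg_iff.1 (hsep p hp q hq)
  refine (hdiff.subset_or_subset isOpen_WR2 isOpen_WL2 disjoint_WR2_WL2 hspace).imp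
    image2_subset_iff.1 fun hL q hq p hp => ?_
  rw [← neg_sub]
  exact image2_subset_iff.1 hL p hp q hq

theorem wedges_causally_separate_double_cones_general {S T : Set (Fin 2 → ℝ)}
    (hS : IsOpen S) (hT : IsOpen T) (hSconn : IsConnected S) (hTconn : IsConnected T)
    (hsep : ∀ p ∈ S, ∀ q ∈ T, mink2 (p - q) (p - q) < 0) :
    ∃ a : Fin 2 → ℝ,
      (S ⊆ (fun w => w + a) '' WR2 ∧ T ⊆ (fun w => w + a) '' WL2) ∨
      (S ⊆ (fun w => w + a) '' WL2 ∧ T ⊆ (fun w => w + a) '' WR2) := by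
  rcases forall_sub_mem_WR2_or_forall_sub_mem_WR2 hSconn.isPreconnected hTconn.isPreconnected hsep
    with hST | hTS
  · obtain ⟨a, ha⟩ := exists_subset_wedges_of_sub_mem_WR2 hS hT hSconn.nonempty hTconn.nonempty hST
    exact ⟨a, .inl ha⟩
  · obtain ⟨a, ha⟩ := exists_subset_wedges_of_sub_mem_WR2 hT hS hTconn.nonempty hSconn.nonempty hTS
    exact ⟨a, .inr ha.symm⟩

/-- wedges causally separate double cones in two dimensions. If two nonempty
double cones `O₁ = O_{x,y}`, `O₂ = O_{x',y'}` are spacelike separated, then there is `a ∈ ℝ²`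
such that one of them is contained in `W_R + a` and the other in `W_L + a`. -/
theorem wedges_causally_separate_double_cones
    (x y x' y' : Fin 2 → ℝ)
    (h₁ : y - x ∈ WR2) (h₂ : y' - x' ∈ WR2)
    (hsep : ∀ p ∈ doubleCone x y, ∀ q ∈ doubleCone x' y', mink2 (p - q) (p - q) < 0) :
    ∃ a : Fin 2 → ℝ,
      (doubleCone x y ⊆ (fun w => w + a) '' WR2 ∧ doubleCone x' y' ⊆ (fun w => w + a) '' WL2) ∨
      (doubleCone x y ⊆ (fun w => w + a) '' WL2 ∧ doubleCone x' y' ⊆ (fun w => w + a) '' WR2) :=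
  wedges_causally_separate_double_cones_general (isOpen_doubleCone x y) (isOpen_doubleCone x' y')
    (isConnected_doubleCone h₁) (isConnected_doubleCone h₂) hsep
end

section
/- The Sinh-Gordon function is a scalar two-particle S-matrix: let 0 < b < π and define S(ζ) = (sinh ζ − i·sin b)/(sinh ζ + i·sin b). Then sinh ζ + i·sin b ≠ 0 for every ζ with 0 ≤ Im ζ ≤ π; S is analytic on the open strip S(0, π), continuous and bounded on the closed strip {0 ≤ Im ζ ≤ π}; for every real θ one has conj(S(θ)) = S(θ)⁻¹ = S(−θ) (in particular |S(θ)| = 1); and S(iπ − ζ) = S(ζ) for every ζ in the closed strip (crossing symmetry). -/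
/-!
`S` is the Cayley map `w ↦ (w - ic)/(w + ic)`, with `c = sin b > 0`, evaluated at `w = sinh ζ`.
Since `Im (sinh ζ) = cosh (Re ζ) sin (Im ζ)`, `sinh` maps the closed strip `0 ≤ Im ζ ≤ π` into the
closed upper half-plane, where the Cayley map is holomorphic and bounded by `1` because `w` is at
least as close to `ic` as to `-ic`. Unitarity and hermitian analyticity reflect the symmetries of
the Cayley map under `w ↦ -w` and `w ↦ -conj w`, and crossing symmetry that of `sinh` under
`ζ ↦ iπ - ζ`.
-/

open Complex

/-- The Sinh-Gordon two-particle S-matrix function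
`S(ζ) = (sinh ζ - i sin b)/(sinh ζ + i sin b)`. -/
noncomputable def sinhGordonS (b : ℝ) (ζ : ℂ) : ℂ :=
  (Complex.sinh ζ - Complex.I * (Real.sin b : ℂ)) / (Complex.sinh ζ + Complex.I * (Real.sin b : ℂ))

/-- The Cayley map `w ↦ (w - ic)/(w + ic)`, which for `0 < c` carries the upper half-plane to the
unit disc and `ic` to `0`. The value at the pole `w = -ic` is the junk value `0`. -/
noncomputable def halfPlaneCayley (c : ℝ) (w : ℂ) : ℂ :=
  (w - I * c) / (w + I * c)

section HalfPlaneCayley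

variable {c : ℝ} {w : ℂ}

lemma add_I_mul_ne_zero_of_im_nonneg (hc : 0 < c) (hw : 0 ≤ w.im) : w + I * c ≠ 0 := by
  intro h
  have him : w.im + c = 0 := by simpa using congrArg im h
  linarith

lemma ofReal_add_I_mul_ne_zero (hc : c ≠ 0) (x : ℝ) : (x : ℂ) + I * c ≠ 0 :=
  fun h => hc (by simpa using congrArg im h)

lemma norm_sub_I_mul_le_norm_add_I_mul (hc : 0 ≤ c) (hw : 0 ≤ w.im) :
    ‖w - I * c‖ ≤ ‖w + I * c‖ := by
  have hdiff : normSq (w + I * c) - normSq (w - I * c) = 4 * (w.im * c) := by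
    simp only [normSq_apply, add_re, add_im, sub_re, sub_im, I_mul_re, I_mul_im, ofReal_re,
      ofReal_im]
    ring
  rw [← sq_le_sq₀ (norm_nonneg _) (norm_nonneg _), ← normSq_eq_norm_sq, ← normSq_eq_norm_sq]
  linarith [mul_nonneg hw hc]

lemma norm_halfPlaneCayley_le_one (hc : 0 ≤ c) (hw : 0 ≤ w.im) : ‖halfPlaneCayley c w‖ ≤ 1 := by
  rw [halfPlaneCayley, norm_div]
  exact div_le_one_of_le₀ (norm_sub_I_mul_le_norm_add_I_mul hc hw) (norm_nonneg _)

lemma differentiableAt_halfPlaneCayley (hw : w + I * c ≠ 0) :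
    DifferentiableAt ℂ (halfPlaneCayley c) w :=
  (differentiableAt_id.sub_const _).div (differentiableAt_id.add_const _) hw

lemma halfPlaneCayley_neg (c : ℝ) (w : ℂ) : halfPlaneCayley c (-w) = (halfPlaneCayley c w)⁻¹ := by
  rw [halfPlaneCayley, halfPlaneCayley, inv_div, ← neg_div_neg_eq]
  congr 1 <;> ring

lemma conj_halfPlaneCayley (c : ℝ) (w : ℂ) :
    starRingEnd ℂ (halfPlaneCayley c w) = halfPlaneCayley c (-starRingEnd ℂ w) := by
  rw [halfPlaneCayley_neg, halfPlaneCayley, halfPlaneCayley, inv_div]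
  simp only [map_div₀, map_sub, map_add, map_mul, conj_I, conj_ofReal, neg_mul, sub_neg_eq_add,
    ← sub_eq_add_neg]

lemma norm_halfPlaneCayley_ofReal (hc : c ≠ 0) (x : ℝ) : ‖halfPlaneCayley c x‖ = 1 := by
  have hconj : (x : ℂ) - I * c = starRingEnd ℂ (x + I * c) := by
    simp [sub_eq_add_neg]
  rw [halfPlaneCayley, norm_div, hconj, norm_conj]
  exact div_self (norm_ne_zero_iff.2 (ofReal_add_I_mul_ne_zero hc x))

end HalfPlaneCayley

lemma im_sinh_eq_cosh_re_mul_sin_im (ζ : ℂ) :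
    (sinh ζ).im = Real.cosh ζ.re * Real.sin ζ.im := by
  conv_lhs => rw [← re_add_im ζ, sinh_add, sinh_mul_I, cosh_mul_I]
  rw [← ofReal_sinh, ← ofReal_cosh, ← ofReal_sin, ← ofReal_cos, ← mul_assoc, ← ofReal_mul,
    ← ofReal_mul, add_im, ofReal_im, im_ofReal_mul, I_im, mul_one, zero_add]

lemma im_sinh_nonneg {ζ : ℂ} (h0 : 0 ≤ ζ.im) (hπ : ζ.im ≤ Real.pi) : 0 ≤ (sinh ζ).im := by
  rw [im_sinh_eq_cosh_re_mul_sin_im]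
  exact mul_nonneg (Real.cosh_pos _).le (Real.sin_nonneg_of_nonneg_of_le_pi h0 hπ)

lemma sinh_pi_mul_I_sub (ζ : ℂ) : sinh (Real.pi * I - ζ) = sinh ζ := by
  rw [sinh_antiperiodic.sub_eq', sinh_neg, neg_neg]

theorem sinhGordon_is_S_matrix_general {c : ℝ} (hc : 0 < c) :
    (∀ ζ : ℂ, 0 ≤ ζ.im → ζ.im ≤ Real.pi → sinh ζ + I * c ≠ 0) ∧
    (∀ ζ : ℂ, 0 ≤ ζ.im → ζ.im ≤ Real.pi →
        DifferentiableAt ℂ (fun z => halfPlaneCayley c (sinh z)) ζ) ∧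
    (∀ ζ : ℂ, 0 ≤ ζ.im → ζ.im ≤ Real.pi → ‖halfPlaneCayley c (sinh ζ)‖ ≤ 1) ∧
    (∀ θ : ℝ,
        starRingEnd ℂ (halfPlaneCayley c (sinh θ)) = (halfPlaneCayley c (sinh θ))⁻¹ ∧
        starRingEnd ℂ (halfPlaneCayley c (sinh θ)) = halfPlaneCayley c (sinh (-θ)) ∧
        ‖halfPlaneCayley c (sinh θ)‖ = 1) ∧
    (∀ ζ : ℂ, halfPlaneCayley c (sinh (Real.pi * I - ζ)) = halfPlaneCayley c (sinh ζ)) := by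
  have hne (ζ : ℂ) (h0 : 0 ≤ ζ.im) (hπ : ζ.im ≤ Real.pi) : sinh ζ + I * c ≠ 0 :=
    add_I_mul_ne_zero_of_im_nonneg hc (im_sinh_nonneg h0 hπ)
  have hconj (θ : ℝ) :
      starRingEnd ℂ (halfPlaneCayley c (sinh θ)) = halfPlaneCayley c (-sinh θ) := by
    rw [conj_halfPlaneCayley, ← sinh_conj, conj_ofReal]
  refine ⟨hne, fun ζ h0 hπ => ?_, fun ζ h0 hπ => ?_, fun θ => ⟨?_, ?_, ?_⟩, fun ζ => ?_⟩
  · exact (differentiableAt_halfPlaneCayley (hne ζ h0 hπ)).comp ζ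
      differentiable_sinh.differentiableAt
  · exact norm_halfPlaneCayley_le_one hc.le (im_sinh_nonneg h0 hπ)
  · rw [hconj, halfPlaneCayley_neg]
  · rw [hconj, sinh_neg]
  · rw [← ofReal_sinh]
    exact norm_halfPlaneCayley_ofReal hc.ne' _
  · rw [sinh_pi_mul_I_sub]

/-- for `0 < b < π`, the Sinh-Gordon function is a scalar two-particle S-matrix:
its denominator does not vanish on the closed strip `0 ≤ Im ζ ≤ π`, it is analytic on the open
strip, continuous and bounded on the closed strip, satisfies unitarity and hermitian
analyticity `conj(S(θ)) = S(θ)⁻¹ = S(-θ)` (so `|S(θ)| = 1`) for real `θ`, and crossing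
symmetry `S(iπ - ζ) = S(ζ)` on the closed strip. -/
theorem sinhGordon_is_S_matrix (b : ℝ) (hb0 : 0 < b) (hbπ : b < Real.pi) :
    (∀ ζ : ℂ, 0 ≤ ζ.im → ζ.im ≤ Real.pi →
        Complex.sinh ζ + Complex.I * (Real.sin b : ℂ) ≠ 0) ∧
    DifferentiableOn ℂ (sinhGordonS b) {ζ : ℂ | 0 < ζ.im ∧ ζ.im < Real.pi} ∧
    ContinuousOn (sinhGordonS b) {ζ : ℂ | 0 ≤ ζ.im ∧ ζ.im ≤ Real.pi} ∧
    (∃ M : ℝ, ∀ ζ : ℂ, 0 ≤ ζ.im → ζ.im ≤ Real.pi → ‖sinhGordonS b ζ‖ ≤ M) ∧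
    (∀ θ : ℝ,
        starRingEnd ℂ (sinhGordonS b θ) = (sinhGordonS b θ)⁻¹ ∧
        starRingEnd ℂ (sinhGordonS b θ) = sinhGordonS b (-θ) ∧
        ‖sinhGordonS b θ‖ = 1) ∧
    (∀ ζ : ℂ, 0 ≤ ζ.im → ζ.im ≤ Real.pi →
        sinhGordonS b ((Real.pi : ℂ) * Complex.I - ζ) = sinhGordonS b ζ) := by
  obtain ⟨hne, hdiff, hnorm, hreal, hcross⟩ :=
    sinhGordon_is_S_matrix_general (Real.sin_pos_of_pos_of_lt_pi hb0 hbπ)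
  exact ⟨hne, fun ζ hζ => (hdiff ζ hζ.1.le hζ.2.le).differentiableWithinAt,
    fun ζ hζ => (hdiff ζ hζ.1 hζ.2).continuousAt.continuousWithinAt, ⟨1, hnorm⟩, hreal,
    fun ζ _ _ => hcross ζ⟩
end

section
/- The S-matrix S(ζ) = exp(i·κ·m²·sinh ζ) with κ > 0, m > 0 is not regular: for every ε > 0, the function ζ ↦ exp(i·κ·m²·sinh ζ) is unbounded on the strip S(−ε, π + ε) = {ζ ∈ ℂ : −ε < Im ζ < π + ε}, i.e. for every M > 0 there exists ζ in this strip with |exp(i·κ·m²·sinh ζ)| > M. -/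
open Complex

/-- The S-matrix of noncommutative Minkowski space, `S(ζ) = exp(i κ m² sinh ζ)`. -/
noncomputable def ncS (κ m : ℝ) (ζ : ℂ) : ℂ :=
  Complex.exp (Complex.I * (κ : ℂ) * (m : ℂ) ^ 2 * Complex.sinh ζ)

/-!
On the horizontal line `Im ζ = θ` one has `‖S(ζ)‖ = exp (-κ m² cosh (Re ζ) sin θ)`, which blows up
as `Re ζ → ∞` as soon as `κ sin θ < 0`. For `κ > 0` such lines lie arbitrarily close below the real
axis, and for `κ < 0` the line `θ = π / 2` in the middle of the strip is one.
-/

open Filter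

theorem sinh_im (z : ℂ) : (sinh z).im = Real.cosh z.re * Real.sin z.im := by
  conv_lhs => rw [← re_add_im z, sinh_add, sinh_mul_I, cosh_mul_I]
  simp [sin_ofReal_re, cosh_ofReal_re]

theorem tendsto_cosh_atTop : Tendsto Real.cosh atTop atTop :=
  tendsto_atTop_mono (fun t => (Real.sinh_lt_cosh t).le) Real.sinhOrderIso.tendsto_atTop

theorem norm_exp_I_mul_ofReal_mul (a : ℝ) (z : ℂ) : ‖exp (I * a * z)‖ = Real.exp (-a * z.im) := by
  simp [norm_exp]

theorem norm_ncS (κ m : ℝ) (ζ : ℂ) :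
    ‖ncS κ m ζ‖ = Real.exp (-(κ * m ^ 2) * (Real.cosh ζ.re * Real.sin ζ.im)) := by
  rw [← sinh_im, ← norm_exp_I_mul_ofReal_mul, ncS]
  push_cast
  rw [mul_assoc I]

theorem tendsto_norm_ncS_add_mul_I_atTop {κ m θ : ℝ} (hm : m ≠ 0) (hθ : κ * Real.sin θ < 0) :
    Tendsto (fun t : ℝ => ‖ncS κ m (t + θ * I)‖) atTop atTop := by
  have hrate : 0 < -(κ * Real.sin θ) * m ^ 2 := mul_pos (neg_pos.mpr hθ) (by positivity)
  have hnorm (t : ℝ) :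
      ‖ncS κ m (t + θ * I)‖ = Real.exp (-(κ * Real.sin θ) * m ^ 2 * Real.cosh t) := by
    have hre : (t + θ * I : ℂ).re = t := by simp
    have him : (t + θ * I : ℂ).im = θ := by simp
    rw [norm_ncS, hre, him]
    ring_nf
  simp only [hnorm]
  exact Real.tendsto_exp_atTop.comp (tendsto_cosh_atTop.const_mul_atTop hrate)

theorem exists_mul_sin_neg {κ ε : ℝ} (hκ : κ ≠ 0) (hε : 0 < ε) :
    ∃ θ : ℝ, -ε < θ ∧ θ < Real.pi + ε ∧ κ * Real.sin θ < 0 := by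
  have hπ := Real.pi_pos
  rcases hκ.lt_or_gt with hneg | hpos
  · exact ⟨Real.pi / 2, by linarith, by linarith, by simpa using hneg⟩
  · obtain ⟨θ, hθ, hθ₀⟩ := exists_between (max_lt (neg_neg_of_pos hε) (neg_neg_of_pos hπ))
    obtain ⟨hεθ, hπθ⟩ := max_lt_iff.mp hθ
    exact ⟨θ, hεθ, by linarith,
      mul_neg_of_pos_of_neg hpos (Real.sin_neg_of_neg_of_neg_pi_lt hθ₀ hπθ)⟩

theorem ncS_not_regular_general {κ m ε : ℝ} (hκ : κ ≠ 0) (hm : m ≠ 0) (hε : 0 < ε) (M : ℝ) :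
    ∃ ζ : ℂ, -ε < ζ.im ∧ ζ.im < Real.pi + ε ∧ M < ‖ncS κ m ζ‖ := by
  obtain ⟨θ, hθ_lower, hθ_upper, hθ⟩ := exists_mul_sin_neg hκ hε
  obtain ⟨t, ht⟩ := ((tendsto_norm_ncS_add_mul_I_atTop hm hθ).eventually_gt_atTop M).exists
  exact ⟨t + θ * I, by simpa using hθ_lower, by simpa using hθ_upper, ht⟩

/-- the S-matrix `S(ζ) = exp(i κ m² sinh ζ)` with `κ > 0`, `m > 0` is not
regular: for every `ε > 0` it is unbounded on the strip `S(-ε, π + ε)`, i.e. for every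
`M > 0` there exists `ζ` in that strip with `|S(ζ)| > M`. -/
theorem ncS_not_regular (κ m : ℝ) (hκ : 0 < κ) (hm : 0 < m)
    (ε : ℝ) (hε : 0 < ε) (M : ℝ) (hM : 0 < M) :
    ∃ ζ : ℂ, -ε < ζ.im ∧ ζ.im < Real.pi + ε ∧ M < ‖ncS κ m ζ‖ :=
  ncS_not_regular_general hκ.ne' hm.ne' hε M
end

section
/- Classification of admissible deformation matrices in dimension d = 4: let Q be a linear map of ℝ⁴ that is skew-symmetric with respect to the Minkowski inner product, i.e. ⟨Qx, y⟩ = −⟨x, Qy⟩ for all x, y. Then Q satisfies the three admissibility conditions (i) ΛQΛ⁻¹ = Q for every proper orthochronous Lorentz transformation Λ with Λ(W_R) = W_R, (ii) ΛQΛ⁻¹ = −Q for every proper orthochronous Lorentz transformation Λ with Λ(W_R) = −W_R, and jQj = Q for the reflection j(x) = (−x₀, −x₁, x₂, x₃), and (iii) Q maps the closed forward light cone {x : x₀ ≥ 0 and ⟨x, x⟩ ≥ 0} into the closed right wedge {x : x₁ ≥ |x₀|} — if and only if there exist κ ≥ 0 and κ′ ∈ ℝ such that (Qx)₀ = κ·x₁,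 (Qx)₁ = κ·x₀, (Qx)₂ = κ′·x₃, and (Qx)₃ = −κ′·x₂, for all x ∈ ℝ⁴. -/
/-- The Minkowski inner product on four-dimensional Minkowski space. -/
noncomputable def mink4 (x y : Fin 4 → ℝ) : ℝ :=
  x 0 * y 0 - x 1 * y 1 - x 2 * y 2 - x 3 * y 3

/-- The right wedge `W_R = {x : x₁ > |x₀|}` in `ℝ⁴`. -/
def WR4 : Set (Fin 4 → ℝ) := {x | |x 0| < x 1}

/-- The reflection `j(x) = (-x₀, -x₁, x₂, x₃)` about the edge of the right wedge. -/
def jrefl4 (x : Fin 4 → ℝ) : Fin 4 → ℝ :=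
  fun i => if i = 0 then -x 0 else if i = 1 then -x 1 else x i

/-! With respect to the Minkowski form, the normal form is `κ' dx₂ ∧ dx₃ - κ dx₀ ∧ dx₁`. A linear
isometry `f` preserving the wedge preserves its edge `x₀ = x₁ = 0`, hence also the orthogonal plane
`x₂ = x₃ = 0`, so it multiplies the two area forms by its minors on these planes. The product of the
minors is `det f = 1` and the first one is `±1`, with the sign of the time orientation of `f`; so
both are equal to that sign, and `f` commutes or anticommutes with the normal form. Conversely, a
map commuting with `j` preserves the two eigenspaces of `j`, which are these same planes, and
skew-symmetry fixes its form on each up to a scalar; the cone condition at `e₀` gives `0 ≤ κ`. -/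

section CoordinatePlanes

variable {ι R : Type*} [CommRing R] {i j : ι}

/-- The coordinate subspace `xᵢ = xⱼ = 0`. In Minkowski space `vanishingOn 0 1` is the edge of the
right wedge, and `vanishingOn 2 3` is the orthogonal plane, spanned by `e₀` and `e₁`. -/
def vanishingOn (i j : ι) : Set (ι → R) := {x | x i = 0 ∧ x j = 0}

/-- The coordinate area form `dxᵢ ∧ dxⱼ`. -/
def planarArea (i j : ι) (x y : ι → R) : R := x i * y j - x j * y i

variable [DecidableEq ι] {f : (ι → R) →ₗ[R] (ι → R)}

lemma sub_single_sub_single_mem_vanishingOn (hij : i ≠ j) (x : ι → R) :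
    x - x i • Pi.single i 1 - x j • Pi.single j 1 ∈ vanishingOn i j := by
  simp [vanishingOn, hij, hij.symm]

lemma apply_eq_of_mapsTo_vanishingOn (hij : i ≠ j)
    (hf : Set.MapsTo f (vanishingOn i j) (vanishingOn i j)) (x : ι → R) :
    f x i = x i * f (Pi.single i 1) i + x j * f (Pi.single j 1) i ∧
      f x j = x i * f (Pi.single i 1) j + x j * f (Pi.single j 1) j := by
  obtain ⟨hi, hj⟩ := hf (sub_single_sub_single_mem_vanishingOn hij x)
  simp only [map_sub, map_smul, Pi.sub_apply, Pi.smul_apply, smul_eq_mul] at hi hj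
  exact ⟨by linear_combination hi, by linear_combination hj⟩

lemma planarArea_map (hij : i ≠ j) (hf : Set.MapsTo f (vanishingOn i j) (vanishingOn i j))
    (x y : ι → R) :
    planarArea i j (f x) (f y) =
      planarArea i j (f (Pi.single i 1)) (f (Pi.single j 1)) * planarArea i j x y := by
  obtain ⟨hxi, hxj⟩ := apply_eq_of_mapsTo_vanishingOn hij hf x
  obtain ⟨hyi, hyj⟩ := apply_eq_of_mapsTo_vanishingOn hij hf y
  simp only [planarArea, hxi, hxj, hyi, hyj]
  ring

lemma det_eq_planarArea_mul_planarArea {f : (Fin 4 → R) →ₗ[R] (Fin 4 → R)}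
    (hf : Set.MapsTo f (vanishingOn 0 1) (vanishingOn 0 1)) :
    LinearMap.det f =
      planarArea 0 1 (f (Pi.single 0 1)) (f (Pi.single 1 1)) *
        planarArea 2 3 (f (Pi.single 2 1)) (f (Pi.single 3 1)) := by
  obtain ⟨h02, h12⟩ := hf (show Pi.single 2 1 ∈ vanishingOn 0 1 by simp [vanishingOn])
  obtain ⟨h03, h13⟩ := hf (show Pi.single 3 1 ∈ vanishingOn 0 1 by simp [vanishingOn])
  have hblocks : (LinearMap.toMatrix' f).submatrix finSumFinEquiv finSumFinEquiv =
      Matrix.fromBlocks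
        !![f (Pi.single 0 1) 0, f (Pi.single 1 1) 0; f (Pi.single 0 1) 1, f (Pi.single 1 1) 1] 0
        !![f (Pi.single 0 1) 2, f (Pi.single 1 1) 2; f (Pi.single 0 1) 3, f (Pi.single 1 1) 3]
        !![f (Pi.single 2 1) 2, f (Pi.single 3 1) 2; f (Pi.single 2 1) 3, f (Pi.single 3 1) 3] := by
    ext (a | a) (b | b) <;> fin_cases a <;> fin_cases b <;> first | rfl | assumption
  rw [← LinearMap.det_toMatrix',
    ← Matrix.det_submatrix_equiv_self (finSumFinEquiv (m := 2) (n := 2)), hblocks,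
    Matrix.det_fromBlocks_zero₁₂, Matrix.det_fin_two_of, Matrix.det_fin_two_of]
  simp only [planarArea]
  ring

end CoordinatePlanes

section Minkowski

variable {u v w x : Fin 4 → ℝ}

lemma eq_of_forall_mink4_eq (h : ∀ y, mink4 u y = mink4 v y) : u = v := by
  ext i
  have hi := h (Pi.single i 1)
  fin_cases i <;> simpa [mink4] using hi

lemma mem_vanishingOn_two_three_iff :
    v ∈ vanishingOn 2 3 ↔ ∀ w ∈ vanishingOn 0 1, mink4 v w = 0 := by
  refine ⟨fun ⟨h2, h3⟩ w ⟨h0, h1⟩ ↦ by simp [mink4, h0, h1, h2, h3], fun h ↦ ⟨?_, ?_⟩⟩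
  · simpa [mink4] using h (Pi.single 2 1) (by simp [vanishingOn])
  · simpa [mink4] using h (Pi.single 3 1) (by simp [vanishingOn])

lemma planarArea_sq_eq_gram (hu : u ∈ vanishingOn 2 3) (hv : v ∈ vanishingOn 2 3) :
    planarArea 0 1 u v ^ 2 = mink4 u v ^ 2 - mink4 u u * mink4 v v := by
  simp only [planarArea, mink4, hu.1, hu.2, hv.1, hv.2]
  ring

lemma abs_one_le_of_causal (h0 : 0 ≤ x 0) (hx : 0 ≤ mink4 x x) : |x 1| ≤ x 0 := by
  refine abs_le_of_sq_le_sq ?_ h0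
  rw [mink4] at hx
  nlinarith [sq_nonneg (x 2), sq_nonneg (x 3)]

lemma abs_one_lt_of_timelike (h0 : 0 < x 0) (hx : 0 < mink4 x x) : |x 1| < x 0 := by
  refine abs_lt_of_sq_lt_sq ?_ h0.le
  rw [mink4] at hx
  nlinarith [sq_nonneg (x 2), sq_nonneg (x 3)]

lemma planarArea_pos_of_timelike_of_mem_WR4 (h0 : 0 < u 0) (hu : 0 < mink4 u u)
    (hw : w ∈ WR4) : 0 < planarArea 0 1 u w := by
  have hlt : |u 1| * |w 0| < u 0 * w 1 :=
    mul_lt_mul'' (abs_one_lt_of_timelike h0 hu) hw (abs_nonneg _) (abs_nonneg _)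
  rw [← abs_mul] at hlt
  exact sub_pos.2 ((le_abs_self _).trans_lt hlt)

end Minkowski

section Edge

lemma eq_zero_of_forall_abs_add_mul_lt {K : Type*} [Field K] [LinearOrder K]
    [IsStrictOrderedRing K] {a b c d : K} (h : ∀ t, |a + t * b| < c + t * d) :
    b = 0 ∧ d = 0 := by
  have hd : d = 0 := by
    by_contra hd
    have hneg := (abs_nonneg _).trans_lt (h (-c / d))
    rw [div_mul_cancel₀ _ hd, add_neg_cancel] at hneg
    exact hneg.false
  refine ⟨?_, hd⟩
  by_contra hb
  have hlt := (le_abs_self _).trans_lt (h ((c - a) / b))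
  rw [div_mul_cancel₀ _ hb, hd, mul_zero, add_zero, add_sub_cancel] at hlt
  exact hlt.false

/-- A description of the edge in terms of the wedge alone: this is why linear maps preserving the
wedge preserve its edge. -/
lemma mem_edge_iff_forall_add_smul_mem_WR4 {v : Fin 4 → ℝ} :
    v ∈ vanishingOn 0 1 ↔ ∀ w ∈ WR4, ∀ t : ℝ, w + t • v ∈ WR4 := by
  refine ⟨fun ⟨h0, h1⟩ w hw t ↦ by simpa [WR4, h0, h1] using hw, fun h ↦ ?_⟩
  refine eq_zero_of_forall_abs_add_mul_lt (a := 0) (c := 1) fun t ↦ ?_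
  simpa [WR4] using h (Pi.single 1 1) (by simp [WR4]) t

end Edge

/-- A linear isometry of Minkowski space that maps the right wedge onto itself. No orientation or
time orientation is fixed, so that a Lorentz transformation `Λ` with `Λ(W_R) = -W_R` is covered
by applying this notion to `-Λ`. -/
structure IsWedgeIsometry (f : (Fin 4 → ℝ) →ₗ[ℝ] (Fin 4 → ℝ)) : Prop where
  mink4_map (x y : Fin 4 → ℝ) : mink4 (f x) (f y) = mink4 x y
  map_mem_WR4_iff (x : Fin 4 → ℝ) : f x ∈ WR4 ↔ x ∈ WR4

/-- `κ` times the boost generator of the right wedge plus `κ'` times the rotation generator of its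
edge: the normal form in the classification. -/
def IsBoostRotation (κ κ' : ℝ) (Q : (Fin 4 → ℝ) →ₗ[ℝ] (Fin 4 → ℝ)) : Prop :=
  ∀ x : Fin 4 → ℝ, Q x 0 = κ * x 1 ∧ Q x 1 = κ * x 0 ∧ Q x 2 = κ' * x 3 ∧ Q x 3 = -κ' * x 2

namespace IsWedgeIsometry

variable {f : (Fin 4 → ℝ) →ₗ[ℝ] (Fin 4 → ℝ)}

lemma of_image_eq (hinj : Function.Injective f) (hmink : ∀ x y, mink4 (f x) (f y) = mink4 x y)
    (hW : f '' WR4 = WR4) : IsWedgeIsometry f where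
  mink4_map := hmink
  map_mem_WR4_iff x := by
    have hmem := hinj.mem_set_image (s := WR4) (a := x)
    rwa [hW] at hmem

lemma neg_of_image_eq (hinj : Function.Injective f)
    (hmink : ∀ x y, mink4 (f x) (f y) = mink4 x y) (hW : f '' WR4 = {x | -x ∈ WR4}) :
    IsWedgeIsometry (-f) where
  mink4_map x y := by
    rw [← hmink x y]
    simp [mink4]
  map_mem_WR4_iff x := by
    have hmem := hinj.mem_set_image (s := WR4) (a := x)
    rwa [hW] at hmem

lemma surjective (hf : IsWedgeIsometry f) : Function.Surjective f := by
  refine LinearMap.injective_iff_surjective.1 ((injective_iff_map_eq_zero f).2 fun x hx ↦ ?_)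
  refine eq_of_forall_mink4_eq fun y ↦ ?_
  rw [← hf.mink4_map x, ← hf.mink4_map 0, hx, map_zero]

lemma map_mem_edge_iff (hf : IsWedgeIsometry f) (v : Fin 4 → ℝ) :
    f v ∈ vanishingOn 0 1 ↔ v ∈ vanishingOn 0 1 := by
  rw [mem_edge_iff_forall_add_smul_mem_WR4, mem_edge_iff_forall_add_smul_mem_WR4,
    hf.surjective.forall]
  simp only [← map_smul, ← map_add, hf.map_mem_WR4_iff]

lemma mapsTo_edge (hf : IsWedgeIsometry f) : Set.MapsTo f (vanishingOn 0 1) (vanishingOn 0 1) :=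
  fun v ↦ (hf.map_mem_edge_iff v).2

lemma mapsTo_edge_orthogonal (hf : IsWedgeIsometry f) :
    Set.MapsTo f (vanishingOn 2 3) (vanishingOn 2 3) := by
  intro v hv
  rw [mem_vanishingOn_two_three_iff] at hv ⊢
  rw [hf.surjective.forall]
  intro w hw
  rw [hf.mink4_map]
  exact hv w ((hf.map_mem_edge_iff w).1 hw)

lemma planarArea_zero_one_sq (hf : IsWedgeIsometry f) :
    planarArea 0 1 (f (Pi.single 0 1)) (f (Pi.single 1 1)) ^ 2 = 1 := by
  rw [planarArea_sq_eq_gram (hf.mapsTo_edge_orthogonal (by simp [vanishingOn]))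
    (hf.mapsTo_edge_orthogonal (by simp [vanishingOn]))]
  simp only [hf.mink4_map]
  simp [mink4]

lemma planarArea_zero_one_eq_one (hf : IsWedgeIsometry f) (h0 : 0 < f (Pi.single 0 1) 0) :
    planarArea 0 1 (f (Pi.single 0 1)) (f (Pi.single 1 1)) = 1 := by
  have hpos : 0 < planarArea 0 1 (f (Pi.single 0 1)) (f (Pi.single 1 1)) :=
    planarArea_pos_of_timelike_of_mem_WR4 h0 (by rw [hf.mink4_map]; simp [mink4])
      ((hf.map_mem_WR4_iff _).2 (by simp [WR4]))
  exact (pow_eq_one_iff_of_nonneg hpos.le two_ne_zero).1 hf.planarArea_zero_one_sq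

lemma planarArea_zero_one_eq_neg_one (hf : IsWedgeIsometry f) (h0 : f (Pi.single 0 1) 0 < 0) :
    planarArea 0 1 (f (Pi.single 0 1)) (f (Pi.single 1 1)) = -1 := by
  have hpos : 0 < planarArea 0 1 (-f (Pi.single 0 1)) (f (Pi.single 1 1)) :=
    planarArea_pos_of_timelike_of_mem_WR4 (by simpa using h0)
      (by rw [← map_neg, hf.mink4_map]; simp [mink4])
      ((hf.map_mem_WR4_iff _).2 (by simp [WR4]))
  refine (sq_eq_one_iff.1 hf.planarArea_zero_one_sq).resolve_left fun h ↦ ?_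
  simp only [planarArea, Pi.neg_apply] at h hpos
  linarith

lemma planarArea_two_three_eq (hf : IsWedgeIsometry f) (hdet : LinearMap.det f = 1) :
    planarArea 2 3 (f (Pi.single 2 1)) (f (Pi.single 3 1)) =
      planarArea 0 1 (f (Pi.single 0 1)) (f (Pi.single 1 1)) := by
  rw [det_eq_planarArea_mul_planarArea hf.mapsTo_edge] at hdet
  linear_combination planarArea 0 1 (f (Pi.single 0 1)) (f (Pi.single 1 1)) * hdet -
    planarArea 2 3 (f (Pi.single 2 1)) (f (Pi.single 3 1)) * hf.planarArea_zero_one_sq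

end IsWedgeIsometry

namespace IsBoostRotation

variable {κ κ' : ℝ} {Q f : (Fin 4 → ℝ) →ₗ[ℝ] (Fin 4 → ℝ)}

lemma mink4_apply (hQ : IsBoostRotation κ κ' Q) (x y : Fin 4 → ℝ) :
    mink4 (Q x) y = κ' * planarArea 2 3 x y - κ * planarArea 0 1 x y := by
  obtain ⟨h0, h1, h2, h3⟩ := hQ x
  simp only [mink4, planarArea, h0, h1, h2, h3]
  ring

lemma map_apply_eq_smul (hQ : IsBoostRotation κ κ' Q) (hf : IsWedgeIsometry f)
    (hdet : LinearMap.det f = 1) (x : Fin 4 → ℝ) :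
    Q (f x) = planarArea 0 1 (f (Pi.single 0 1)) (f (Pi.single 1 1)) • f (Q x) := by
  refine eq_of_forall_mink4_eq (hf.surjective.forall.2 fun y ↦ ?_)
  set ε := planarArea 0 1 (f (Pi.single 0 1)) (f (Pi.single 1 1))
  calc mink4 (Q (f x)) (f y)
      = κ' * planarArea 2 3 (f x) (f y) - κ * planarArea 0 1 (f x) (f y) := hQ.mink4_apply _ _
    _ = ε * (κ' * planarArea 2 3 x y - κ * planarArea 0 1 x y) := by
      rw [planarArea_map (by decide) hf.mapsTo_edge,
        planarArea_map (by decide) hf.mapsTo_edge_orthogonal, hf.planarArea_two_three_eq hdet]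
      ring
    _ = ε * mink4 (f (Q x)) (f y) := by rw [hf.mink4_map, hQ.mink4_apply]
    _ = mink4 (ε • f (Q x)) (f y) := by
      simp only [mink4, Pi.smul_apply, smul_eq_mul]
      ring

lemma map_comm (hQ : IsBoostRotation κ κ' Q) (hf : IsWedgeIsometry f)
    (hdet : LinearMap.det f = 1) (h0 : 0 < f (Pi.single 0 1) 0) (x : Fin 4 → ℝ) :
    f (Q x) = Q (f x) := by
  rw [hQ.map_apply_eq_smul hf hdet, hf.planarArea_zero_one_eq_one h0, one_smul]

lemma map_anticomm (hQ : IsBoostRotation κ κ' Q) (hf : IsWedgeIsometry f)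
    (hdet : LinearMap.det f = 1) (h0 : f (Pi.single 0 1) 0 < 0) (x : Fin 4 → ℝ) :
    f (Q x) = -Q (f x) := by
  rw [hQ.map_apply_eq_smul hf hdet, hf.planarArea_zero_one_eq_neg_one h0, neg_one_smul, neg_neg]

lemma jrefl4_conj (hQ : IsBoostRotation κ κ' Q) (x : Fin 4 → ℝ) :
    jrefl4 (Q (jrefl4 x)) = Q x := by
  obtain ⟨h0, h1, h2, h3⟩ := hQ x
  obtain ⟨hj0, hj1, hj2, hj3⟩ := hQ (jrefl4 x)
  ext i
  fin_cases i <;> simp [jrefl4, *]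

lemma abs_apply_zero_le (hQ : IsBoostRotation κ κ' Q) (hκ : 0 ≤ κ) {x : Fin 4 → ℝ}
    (h0 : 0 ≤ x 0) (hx : 0 ≤ mink4 x x) : |Q x 0| ≤ Q x 1 := by
  rw [(hQ x).1, (hQ x).2.1, abs_mul, abs_of_nonneg hκ]
  exact mul_le_mul_of_nonneg_left (abs_one_le_of_causal h0 hx) hκ

end IsBoostRotation

section Reflection

variable {v : Fin 4 → ℝ} {Q : (Fin 4 → ℝ) →ₗ[ℝ] (Fin 4 → ℝ)}

lemma jrefl4_jrefl4 (x : Fin 4 → ℝ) : jrefl4 (jrefl4 x) = x := by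
  ext i
  fin_cases i <;> simp [jrefl4]

lemma jrefl4_eq_self_iff : jrefl4 v = v ↔ v ∈ vanishingOn 0 1 := by
  simp [funext_iff, Fin.forall_fin_succ, jrefl4, vanishingOn, neg_eq_self]

lemma jrefl4_eq_neg_iff : jrefl4 v = -v ↔ v ∈ vanishingOn 2 3 := by
  simp [funext_iff, Fin.forall_fin_succ, jrefl4, vanishingOn, self_eq_neg]

lemma map_jrefl4_of_conj (hj : ∀ x, jrefl4 (Q (jrefl4 x)) = Q x) (x : Fin 4 → ℝ) :
    Q (jrefl4 x) = jrefl4 (Q x) := by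
  rw [← hj x, jrefl4_jrefl4]

lemma mapsTo_edge_of_jrefl4_conj (hj : ∀ x, jrefl4 (Q (jrefl4 x)) = Q x) :
    Set.MapsTo Q (vanishingOn 0 1) (vanishingOn 0 1) := by
  intro v hv
  rw [← jrefl4_eq_self_iff] at hv ⊢
  rw [← map_jrefl4_of_conj hj, hv]

lemma mapsTo_edge_orthogonal_of_jrefl4_conj (hj : ∀ x, jrefl4 (Q (jrefl4 x)) = Q x) :
    Set.MapsTo Q (vanishingOn 2 3) (vanishingOn 2 3) := by
  intro v hv
  rw [← jrefl4_eq_neg_iff] at hv ⊢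
  rw [← map_jrefl4_of_conj hj, hv, map_neg]

lemma isBoostRotation_of_skew_of_jrefl4_conj (hskew : ∀ x y, mink4 (Q x) y = -mink4 x (Q y))
    (hj : ∀ x, jrefl4 (Q (jrefl4 x)) = Q x) :
    IsBoostRotation (Q (Pi.single 0 1) 1) (Q (Pi.single 3 1) 2) Q := by
  intro x
  obtain ⟨h0, h1⟩ :=
    apply_eq_of_mapsTo_vanishingOn (by decide) (mapsTo_edge_of_jrefl4_conj hj) x
  obtain ⟨h2, h3⟩ :=
    apply_eq_of_mapsTo_vanishingOn (by decide) (mapsTo_edge_orthogonal_of_jrefl4_conj hj) x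
  have hentry (a b : Fin 4) := hskew (Pi.single a 1) (Pi.single b 1)
  have h00 : Q (Pi.single 0 1) 0 = 0 := by simpa [mink4, self_eq_neg] using hentry 0 0
  have h11 : Q (Pi.single 1 1) 1 = 0 := by simpa [mink4, neg_eq_self] using hentry 1 1
  have h22 : Q (Pi.single 2 1) 2 = 0 := by simpa [mink4, neg_eq_self] using hentry 2 2
  have h33 : Q (Pi.single 3 1) 3 = 0 := by simpa [mink4, neg_eq_self] using hentry 3 3
  have h01 : Q (Pi.single 1 1) 0 = Q (Pi.single 0 1) 1 := by
    simpa [mink4] using (hentry 0 1).symm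
  have h23 : Q (Pi.single 2 1) 3 = -Q (Pi.single 3 1) 2 := by
    simpa [mink4, neg_eq_iff_eq_neg] using hentry 2 3
  rw [h0, h1, h2, h3, h00, h11, h22, h33, h01, h23]
  refine ⟨?_, ?_, ?_, ?_⟩ <;> ring

end Reflection

/-- classification of admissible deformation matrices in dimension `d = 4`:
a Minkowski-skew-symmetric linear map `Q` of `ℝ⁴` satisfies the admissibility conditions
(i) `ΛQΛ⁻¹ = Q` for proper orthochronous `Λ` with `Λ(W_R) = W_R`, (ii) `ΛQΛ⁻¹ = -Q` for
proper orthochronous `Λ` with `Λ(W_R) = -W_R` and `jQj = Q`, (iii) `Q` maps the closed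
forward light cone into the closed right wedge — if and only if there are `κ ≥ 0`, `κ' ∈ ℝ`
with `Qx = (κ x₁, κ x₀, κ' x₃, -κ' x₂)`. -/
theorem admissible_Q_classification_dim4
    (Q : (Fin 4 → ℝ) →ₗ[ℝ] (Fin 4 → ℝ))
    (hskew : ∀ x y, mink4 (Q x) y = - mink4 x (Q y)) :
    ((∀ Λ : (Fin 4 → ℝ) →ₗ[ℝ] (Fin 4 → ℝ),
        Function.Bijective Λ → (∀ x y, mink4 (Λ x) (Λ y) = mink4 x y) →
        LinearMap.det Λ = 1 → 0 < Λ (Pi.single 0 1) 0 →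
        (⇑Λ) '' WR4 = WR4 → ∀ x, Λ (Q x) = Q (Λ x)) ∧
     (∀ Λ : (Fin 4 → ℝ) →ₗ[ℝ] (Fin 4 → ℝ),
        Function.Bijective Λ → (∀ x y, mink4 (Λ x) (Λ y) = mink4 x y) →
        LinearMap.det Λ = 1 → 0 < Λ (Pi.single 0 1) 0 →
        (⇑Λ) '' WR4 = {x | -x ∈ WR4} → ∀ x, Λ (Q x) = - Q (Λ x)) ∧
     (∀ x, jrefl4 (Q (jrefl4 x)) = Q x) ∧
     (∀ x : Fin 4 → ℝ, 0 ≤ x 0 → 0 ≤ mink4 x x → |Q x 0| ≤ Q x 1))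
    ↔ (∃ κ κ' : ℝ, 0 ≤ κ ∧ ∀ x : Fin 4 → ℝ,
        Q x 0 = κ * x 1 ∧ Q x 1 = κ * x 0 ∧
        Q x 2 = κ' * x 3 ∧ Q x 3 = -κ' * x 2) := by
  constructor
  · rintro ⟨-, -, hj, hcone⟩
    have hκ : 0 ≤ Q (Pi.single 0 1) 1 :=
      (abs_nonneg _).trans (hcone (Pi.single 0 1) (by simp) (by simp [mink4]))
    exact ⟨_, _, hκ, isBoostRotation_of_skew_of_jrefl4_conj hskew hj⟩
  · rintro ⟨κ, κ', hκ, hQ : IsBoostRotation κ κ' Q⟩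
    refine ⟨fun Λ hbij hmink hdet h0 hW ↦ ?_, fun Λ hbij hmink hdet h0 hW x ↦ ?_,
      hQ.jrefl4_conj, fun x ↦ hQ.abs_apply_zero_le hκ⟩
    · exact hQ.map_comm (.of_image_eq hbij.injective hmink hW) hdet h0
    · have hdet_neg : LinearMap.det (-Λ) = 1 := by
        rw [← neg_one_smul ℝ Λ, LinearMap.det_smul, hdet]
        norm_num
      have hanti := hQ.map_anticomm (.neg_of_image_eq hbij.injective hmink hW) hdet_neg
        (by simpa using h0) x
      simpa [neg_eq_iff_eq_neg] using hanti
end
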